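/- There exist absolute constants c > 0 and C > 0 with the following property. Let 0 < ε < 1/2, B > 1, and let N be a positive integer; set r := c·B·√(log(1/ε)) and L := r·√(2·log(1/ε)), and assume 1 < B < r < L < N/2. Then for every w ∈ ℤ whose residue modulo N, taken in (−N/2, N/2], has absolute value greater than N/B, one has |Σ_{l∈ℤ, |l|≤L} G_{L,r,l}·exp(2πi·w·l/N)| ≤ C·ε. -/

import Mathlib

open MeasureTheory Real
open scoped ENNReal NNReal

noncomputable section

/-- The half-open unit cube `[0,1)^d`. -/
def unitCube (d : ℕ) : Set (Fin d → ℝ) := Set.univ.pi fun _ => Set.Ico (0 : ℝ) 1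

/-- `INT f = ∫_{[0,1]^d} f(x) dx`. -/
def INT {d : ℕ} (f : (Fin d → ℝ) → ℂ) : ℂ := ∫ x in unitCube d, f x

/-- The character `x ↦ e^{2πi w·x}`. -/
def eWX {d : ℕ} (w : Fin d → ℤ) (x : Fin d → ℝ) : ℂ :=
  Complex.exp (2 * (Real.pi : ℂ) * Complex.I * ∑ j, (w j : ℂ) * (x j : ℂ))

/-- Fourier coefficient `f̂(w) = ∫_{[0,1]^d} f(x) e^{-2πi w·x} dx`. -/
def fCoeff {d : ℕ} (f : (Fin d → ℝ) → ℂ) (w : Fin d → ℤ) : ℂ :=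
  ∫ x in unitCube d,
    f x * Complex.exp (-(2 * (Real.pi : ℂ)) * Complex.I * ∑ j, (w j : ℂ) * (x j : ℂ))

/-- Truncated periodized Gaussian window `G_{L,r,l}`. -/
def Gwin (N : ℕ) (r L : ℝ) (l : ℤ) : ℝ :=
  ∑' k : ℤ, if |(l : ℝ) + k * N| ≤ L then
      (r * Real.sqrt (2 * Real.pi))⁻¹ * Real.exp (-((l : ℝ) + k * N) ^ 2 / (2 * r ^ 2))
    else 0

/-- Fully periodized (untruncated) Gaussian window `G_{r,l}`. -/
def Gfull (N : ℕ) (r : ℝ) (l : ℤ) : ℝ :=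
  ∑' k : ℤ, (r * Real.sqrt (2 * Real.pi))⁻¹ * Real.exp (-((l : ℝ) + k * N) ^ 2 / (2 * r ^ 2))

/-- Sample space for the random shifts `η = (η_u)_{u ∈ ℤ_N^d}`. -/
abbrev ηSpace (N d : ℕ) := (Fin d → ZMod N) → Fin d → ℝ

/-- The random sample point `{(z - lH)/N} + η_{u(l)}`, where `u(l) = (z - lH) mod N`. -/
def samplePt (N : ℕ) {d : ℕ} (H z : Fin d → ℤ) (η : ηSpace N d) (l : ℤ) : Fin d → ℝ :=
  fun j => Int.fract (((z j - l * H j : ℤ) : ℝ) / N)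
      + η (fun i => ((z i - l * H i : ℤ) : ZMod N)) j

/-- The randomized estimator `I(f_{N,η})_{H,L,r,z}`. -/
def estim (N : ℕ) {d : ℕ} (L r : ℝ) (f : (Fin d → ℝ) → ℂ)
    (H z : Fin d → ℤ) (η : ηSpace N d) : ℂ :=
  ∑' l : ℤ, if |(l : ℝ)| ≤ L then f (samplePt N H z η l) * ((Gwin N r L l : ℝ) : ℂ) else 0

/-- Uniform probability measure on a finite type. -/
def unifFin (α : Type*) [MeasurableSpace α] [Fintype α] : Measure α :=
  (Fintype.card α : ℝ≥0∞)⁻¹ • Measure.count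

/-- Uniform distribution on `[0, 1/N)`. -/
def cellUniform (N : ℕ) : Measure ℝ := (N : ℝ≥0∞) • volume.restrict (Set.Ico (0 : ℝ) (1 / N))

/-- The distribution of `η`: i.i.d. uniform on `[0,1/N)^d`. -/
def ηMeas (N d : ℕ) [NeZero N] : Measure (ηSpace N d) :=
  Measure.pi fun _ => Measure.pi fun _ => cellUniform N

/-- Sample space for `H` (uniform on `ℤ^d ∩ [1,N)^d`), encoded via `Fin (N-1)`. -/
abbrev Hspace (N d : ℕ) := Fin d → Fin (N - 1)

/-- Sample space for `z` (uniform on `ℤ^d ∩ [0,N)^d`). -/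
abbrev Zspace (N d : ℕ) := Fin d → Fin N

/-- Decoding of `H`: values in `ℤ ∩ [1,N)`. -/
def hDec {N d : ℕ} (H : Hspace N d) : Fin d → ℤ := fun j => (H j : ℤ) + 1

/-- Decoding of `z`: values in `ℤ ∩ [0,N)`. -/
def zDec {N d : ℕ} (z : Zspace N d) : Fin d → ℤ := fun j => (z j : ℤ)

/-- Full sample space of the algorithm: `(H, z, η)`. -/
abbrev Ωspace (N d : ℕ) := Hspace N d × Zspace N d × ηSpace N d

/-- Joint distribution of the independent random inputs `(H, z, η)`. -/
def μΩ (N d : ℕ) [NeZero N] : Measure (Ωspace N d) :=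
  (unifFin (Hspace N d)).prod ((unifFin (Zspace N d)).prod (ηMeas N d))

/-- The estimator as a function of the random input `ω = (H, z, η)`. -/
def estimRV (N : ℕ) {d : ℕ} (L r : ℝ) (f : (Fin d → ℝ) → ℂ) (ω : Ωspace N d) : ℂ :=
  estim N L r f (hDec ω.1) (zDec ω.2.1) ω.2.2

/-- Median of a finite family of reals (middle order statistic for odd size). -/
def medianReal {t : ℕ} (v : Fin t → ℝ) : ℝ :=
  ((Finset.univ.val.map v).sort (· ≤ ·)).getD ((t - 1) / 2) 0

/-- Median of complex numbers: medians of real and imaginary parts. -/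
def medianC {t : ℕ} (v : Fin t → ℂ) : ℂ :=
  ⟨medianReal fun j => (v j).re, medianReal fun j => (v j).im⟩

/-- Grid point `u/N ∈ [0,1)^d` attached to `u ∈ ℤ_N^d`. -/
def gridPt {N d : ℕ} (u : Fin d → ZMod N) : Fin d → ℝ := fun j => ((u j).val : ℝ) / N

/-- The representative of `w` modulo `N` lying in `(-N/2, N/2]`. -/
def bres (N : ℕ) (w : ℤ) : ℤ := w - N * ⌈(w : ℚ) / (N : ℚ) - 1 / 2⌉

/-- The weight `(1 + (Σ_j 2π|w_j|)^s)²` of the isotropic Sobolev norm. -/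
def sobWeight {d : ℕ} (s : ℝ) (w : Fin d → ℤ) : ℝ :=
  (1 + (∑ j, 2 * Real.pi * |(w j : ℝ)|) ^ s) ^ 2

/-- Squared isotropic Sobolev norm `‖f‖²_{H^s(𝕋^d)}` (as a sum over frequencies). -/
def sobNormSq {d : ℕ} (s : ℝ) (f : (Fin d → ℝ) → ℂ) : ℝ :=
  ∑' w : Fin d → ℤ, sobWeight s w * ‖fCoeff f w‖ ^ 2

/-- The Korobov weight `Γ_{γ,s}(w) = γ_{supp w}^s ∏_j max(1,|w_j|^s)`. -/
def korWeight {d : ℕ} (γ : Finset (Fin d) → ℝ) (s : ℝ) (w : Fin d → ℤ) : ℝ :=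
  (γ (Finset.univ.filter fun j => w j ≠ 0)) ^ s * ∏ j, max 1 (|(w j : ℝ)| ^ s)

end

lemma wk_summable {a : ℝ} (ha : 0 < a) (x : ℝ) :
    Summable fun n : ℤ => Real.exp (-(a * ((n : ℝ) - x) ^ 2)) := by
  have h := ((summable_jacobiTheta₂_term_iff ((-(a * x / π) : ℝ) * Complex.I)
    ((a / π : ℝ) * Complex.I)).mpr (by simp; positivity)).norm
  have h2 := h.mul_left (Real.exp (-(a * x ^ 2)))
  refine h2.congr fun n => ?_
  rw [norm_jacobiTheta₂_term, ← Real.exp_add]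
  congr 1
  simp
  field_simp
  ring

lemma wk_poisson {r : ℝ} (hr : 0 < r) (p q : ℝ) (f : ℤ → ℝ) (hf : Summable f)
    (hb : ∀ n : ℤ, Real.exp (-(2 * π ^ 2 * r ^ 2) * (((n : ℝ) - q) ^ 2 - p ^ 2)) ≤ f n) :
    ‖∑' n : ℤ, Complex.exp (-((n : ℂ) ^ 2 / (2 * r ^ 2))
      + 2 * π * (p + q * Complex.I) * n)‖ ≤ r * Real.sqrt (2 * π) * ∑' n, f n := by
  have hpi := Real.pi_pos
  have ha : 0 < 1 / (2 * π * r ^ 2) := by positivity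
  have key := Complex.tsum_exp_neg_quadratic
    (a := ((1 / (2 * π * r ^ 2) : ℝ) : ℂ)) (by rw [Complex.ofReal_re]; exact ha)
    (p + q * Complex.I)
  have e1 : ∀ n : ℤ, -((n : ℂ) ^ 2 / (2 * r ^ 2)) + 2 * π * (p + q * Complex.I) * n =
      -π * ((1 / (2 * π * r ^ 2) : ℝ) : ℂ) * n ^ 2 + 2 * π * (p + q * Complex.I) * n := by
    intro n
    have : (π : ℂ) ≠ 0 := by exact_mod_cast hpi.ne'
    have : (r : ℂ) ≠ 0 := by exact_mod_cast hr.ne'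
    push_cast
    field_simp
  simp_rw [e1]
  rw [key, norm_mul]
  have e2 : ‖1 / ((1 / (2 * π * r ^ 2) : ℝ) : ℂ) ^ (1 / 2 : ℂ)‖ = r * Real.sqrt (2 * π) := by
    have : (1 / 2 : ℂ) = ((1 / 2 : ℝ) : ℂ) := by push_cast; rfl
    rw [this, ← Complex.ofReal_cpow ha.le, ← Real.sqrt_eq_rpow, norm_div, norm_one,
      Complex.norm_real, Real.norm_of_nonneg (Real.sqrt_nonneg _), Real.sqrt_div zero_le_one,
      Real.sqrt_one, one_div_one_div, Real.sqrt_mul (by positivity), Real.sqrt_sq hr.le, mul_comm]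
  rw [e2]
  have e3 : ∀ n : ℤ, ‖Complex.exp (-π / ((1 / (2 * π * r ^ 2) : ℝ) : ℂ) *
      (n + Complex.I * (p + q * Complex.I)) ^ 2)‖ ≤ f n := by
    intro n
    refine le_trans (le_of_eq ?_) (hb n)
    have : (-π / ((1 / (2 * π * r ^ 2) : ℝ) : ℂ) *
      (n + Complex.I * (p + q * Complex.I)) ^ 2) =
      ((-(2 * π ^ 2 * r ^ 2) * (((n : ℝ) - q) ^ 2 - p ^ 2) : ℝ) : ℂ) +
      ((-(2 * π ^ 2 * r ^ 2) * (2 * ((n : ℝ) - q) * p) : ℝ) : ℂ) * Complex.I := by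
      have h3 : (-π / ((1 / (2 * π * r ^ 2) : ℝ) : ℂ)) = -(2 * π ^ 2 * r ^ 2) := by
        push_cast
        simp only [one_div, div_inv_eq_mul]
        ring
      rw [h3]
      push_cast
      linear_combination (-(2 * (π : ℂ) ^ 2 * r ^ 2)) *
        (p ^ 2 + 2 * n * q + 2 * Complex.I * p * q + q ^ 2 * (Complex.I ^ 2 - 1)) * Complex.I_sq
    rw [this, Complex.norm_exp, Complex.add_re, Complex.ofReal_re, Complex.re_ofReal_mul]
    simp
  gcongr
  exact (norm_tsum_le_tsum_norm (hf.of_nonneg_of_le (fun _ => norm_nonneg _) e3)).trans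
    ((hf.of_nonneg_of_le (fun _ => norm_nonneg _) e3).tsum_le_tsum e3 hf)

lemma wk_shift {r : ℝ} (hr : 1 < r) (x : ℝ) :
    ∑' n : ℤ, Real.exp (-((1 / (2 * r ^ 2)) * ((n : ℝ) - x) ^ 2)) ≤
      r * Real.sqrt (2 * π) * ∑' n : ℤ, Real.exp (-(1 * ((n : ℝ) - 0) ^ 2)) := by
  have hr0 : 0 < r := by linarith
  have hpi := Real.pi_gt_three
  have hs := wk_summable one_pos 0
  set p : ℝ := x / (2 * π * r ^ 2) with hp
  set E : ℝ := Real.exp (x ^ 2 / (2 * r ^ 2)) with hE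
  have hE0 : 0 < E := Real.exp_pos _
  have h := wk_poisson hr0 p 0 _ (hs.mul_left E) (by
    intro n
    rw [hE, ← Real.exp_add]
    apply Real.exp_le_exp.mpr
    have : (2 * π ^ 2 * r ^ 2) * p ^ 2 = x ^ 2 / (2 * r ^ 2) := by
      rw [hp]; field_simp
    have h2 : 1 ≤ 2 * π ^ 2 * r ^ 2 := by
      have a1 : 1 ≤ r ^ 2 := one_le_pow₀ hr.le
      have a2 : 1 ≤ π ^ 2 := one_le_pow₀ (by linarith)
      nlinarith [mul_le_mul a2 a1 zero_le_one (by positivity)]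
    nlinarith [sq_nonneg (n : ℝ)])
  have e : ∀ n : ℤ, Complex.exp (-((n : ℂ) ^ 2 / (2 * r ^ 2))
      + 2 * π * (p + (0 : ℝ) * Complex.I) * n) =
      ((E * Real.exp (-((1 / (2 * r ^ 2)) * ((n : ℝ) - x) ^ 2)) : ℝ) : ℂ) := by
    intro n
    rw [hE, ← Real.exp_add, Complex.ofReal_exp]
    congr 1
    have : (π : ℂ) ≠ 0 := by exact_mod_cast pi_pos.ne'
    have : (r : ℂ) ≠ 0 := by exact_mod_cast hr0.ne'
    rw [hp]
    push_cast
    field_simp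
    ring
  simp_rw [e] at h
  rw [← Complex.ofReal_tsum, Complex.norm_real, tsum_mul_left, tsum_mul_left,
    Real.norm_of_nonneg (mul_nonneg hE0.le (tsum_nonneg fun _ => (Real.exp_pos _).le))] at h
  have h' : E * ∑' n : ℤ, Real.exp (-((1 / (2 * r ^ 2)) * ((n : ℝ) - x) ^ 2)) ≤
    E * (r * Real.sqrt (2 * π) * ∑' n : ℤ, Real.exp (-(1 * ((n : ℝ) - 0) ^ 2))) := by
    refine h.trans (le_of_eq (by ring))
  exact le_of_mul_le_mul_left h' hE0

lemma wk_gwin {N : ℕ} {r L : ℝ} (hL : L < (N : ℝ) / 2) (l : ℤ) (hl : |(l : ℝ)| ≤ L) :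
    Gwin N r L l =
      (r * Real.sqrt (2 * π))⁻¹ * Real.exp (-((1 / (2 * r ^ 2)) * ((l : ℝ) - 0) ^ 2)) := by
  unfold Gwin
  rw [tsum_eq_single 0]
  · simp only [Int.cast_zero, zero_mul, add_zero, hl, if_true, sub_zero]
    congr 2
    ring
  · intro k hk
    rw [if_neg]
    intro h
    have hk1 : (1 : ℝ) ≤ |(k : ℝ)| := by exact_mod_cast Int.one_le_abs hk
    have : |(k : ℝ) * N| ≤ |(l : ℝ) + k * N| + |(l : ℝ)| := by
      have := abs_sub ((l : ℝ) + k * N) l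
      simpa using this
    rw [abs_mul, Nat.abs_cast] at this
    nlinarith [abs_nonneg (l : ℝ)]

lemma wk_bres {N : ℕ} (hN : 0 < N) (w : ℤ) :
    |(bres N w : ℝ)| ≤ (N : ℝ) / 2 := by
  have hN' : (0 : ℚ) < N := by exact_mod_cast hN
  have h : |(bres N w : ℚ)| ≤ (N : ℚ) / 2 := by
    unfold bres
    have h1 := Int.le_ceil ((w : ℚ) / (N : ℚ) - 1 / 2)
    have h2 := Int.ceil_lt_add_one ((w : ℚ) / (N : ℚ) - 1 / 2)
    have h3 : (w : ℚ) = N * ((w : ℚ) / N) := by field_simp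
    push_cast
    rw [abs_le]
    constructor <;> nlinarith
  have h' : ((|(bres N w : ℚ)| : ℚ) : ℝ) ≤ (((N : ℚ) / 2 : ℚ) : ℝ) := by exact_mod_cast h
  push_cast at h'
  exact h'

lemma wk_exponent {r β B lg n : ℝ} (hr1 : 1 < r) (hlg0 : 0 < lg) (hr2 : r ^ 2 = B ^ 2 * lg)
    (hβB : 1 ≤ β ^ 2 * B ^ 2) (hq : β ^ 2 / 2 + n ^ 2 / 8 ≤ (n - β) ^ 2) :
    -(2 * π ^ 2 * r ^ 2) * ((n - β) ^ 2 - 0 ^ 2) ≤ -lg + -(1 * (n - 0) ^ 2) := by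
  have hpi := Real.pi_gt_three
  have hp2 : 9 ≤ π ^ 2 := by nlinarith
  have hr12 : 1 ≤ r ^ 2 := one_le_pow₀ hr1.le
  have h1 : lg ≤ r ^ 2 * β ^ 2 := by
    have := mul_le_mul_of_nonneg_right hβB hlg0.le
    rw [hr2]; linarith
  have h2 : 9 * 1 ≤ π ^ 2 * r ^ 2 := mul_le_mul hp2 hr12 zero_le_one (by positivity)
  have h3 : 9 * lg ≤ π ^ 2 * (r ^ 2 * β ^ 2) := mul_le_mul hp2 h1 hlg0.le (by positivity)
  have h4 := mul_le_mul_of_nonneg_left hq (by positivity : 0 ≤ 2 * π ^ 2 * r ^ 2)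
  have h5 := mul_le_mul_of_nonneg_right h2 (sq_nonneg n)
  have h6 := sq_nonneg n
  linarith

set_option maxHeartbeats 2000000 in
/-- the truncated periodized Gaussian window kills frequencies whose
balanced residue mod `N` is larger than `N/B` in absolute value. -/
theorem window_kills_high_frequencies :
    ∃ c C : ℝ, 0 < c ∧ 0 < C ∧
      ∀ (ε B : ℝ) (N : ℕ) (r L : ℝ),
        0 < ε → ε < 1 / 2 → 1 < B → 0 < N →
        r = c * B * Real.sqrt (Real.log (1 / ε)) →
        L = r * Real.sqrt (2 * Real.log (1 / ε)) →
        B < r → r < L → L < (N : ℝ) / 2 →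
        ∀ w : ℤ, (N : ℝ) / B < |(bres N w : ℝ)| →
          ‖∑' l : ℤ, (if |(l : ℝ)| ≤ L then
                ((Gwin N r L l : ℝ) : ℂ)
                  * Complex.exp (2 * (Real.pi : ℂ) * Complex.I * (w : ℂ) * (l : ℂ) / (N : ℂ))
              else 0)‖ ≤ C * ε := by
  have hs1 := wk_summable one_pos 0
  set K : ℝ := ∑' n : ℤ, Real.exp (-(1 * ((n : ℝ) - 0) ^ 2)) with hK
  have hK0 : 0 < K := hs1.tsum_pos (fun _ => (Real.exp_pos _).le) 0 (Real.exp_pos _)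
  refine ⟨1, 3 * K, one_pos, by positivity, ?_⟩
  intro ε B N r L hε hε2 hB hN hr hL hBr hrL hLN w hw
  have hr1 : 1 < r := hB.trans hBr
  have hr0 : 0 < r := by linarith
  have hN0 : (0 : ℝ) < N := by exact_mod_cast hN
  have hpi := Real.pi_gt_three
  set M : ℝ := r * Real.sqrt (2 * π) with hM
  have hM0 : 0 < M := by positivity
  set lg := Real.log (1 / ε) with hlg
  have hlg0 : 0 < lg := Real.log_pos (by rw [lt_div_iff₀ hε]; linarith)
  have hεexp : Real.exp (-lg) = ε := by
    rw [hlg, one_div, Real.log_inv, neg_neg, Real.exp_log hε]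
  have hr2 : r ^ 2 = B ^ 2 * lg := by
    rw [hr, one_mul, mul_pow, Real.sq_sqrt hlg0.le]
  have hL2 : L ^ 2 = 2 * r ^ 2 * lg := by
    rw [hL, mul_pow, Real.sq_sqrt (by positivity)]; ring
  set β : ℝ := (bres N w : ℝ) / N with hβ
  have hβ2 : |β| ≤ 1 / 2 := by
    rw [hβ, abs_div, Nat.abs_cast, div_le_iff₀ hN0]
    linarith [wk_bres hN w]
  have hβB : 1 ≤ β ^ 2 * B ^ 2 := by
    have : 1 ≤ |β| * B := by
      rw [hβ, abs_div, Nat.abs_cast]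
      rw [div_lt_iff₀ (by linarith)] at hw
      rw [div_mul_eq_mul_div, le_div_iff₀ hN0]
      linarith
    calc (1 : ℝ) ≤ (|β| * B) ^ 2 := one_le_pow₀ this
      _ = _ := by rw [mul_pow, sq_abs]
  -- characters
  have hchar : ∀ l : ℤ, Complex.exp (2 * (π : ℂ) * Complex.I * (w : ℂ) * (l : ℂ) / (N : ℂ)) =
      Complex.exp (2 * π * ((0 : ℝ) + β * Complex.I) * l) := by
    intro l
    rw [Complex.exp_eq_exp_iff_exists_int]
    refine ⟨⌈(w : ℚ) / (N : ℚ) - 1 / 2⌉ * l, ?_⟩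
    have hNc : (N : ℂ) ≠ 0 := by exact_mod_cast hN.ne'
    rw [hβ]
    unfold bres
    push_cast
    field_simp
    ring
  set g : ℤ → ℝ := fun l => Real.exp (-((1 / (2 * r ^ 2)) * ((l : ℝ) - 0) ^ 2)) with hg
  have hgs : Summable g := wk_summable (by positivity) 0
  set e : ℤ → ℂ := fun l => Complex.exp (2 * π * ((0 : ℝ) + β * Complex.I) * l) with he
  have henorm : ∀ l, ‖e l‖ = 1 := by
    intro l
    have : (2 * π * ((0 : ℝ) + β * Complex.I) * l : ℂ) = ((2 * π * β * l : ℝ) : ℂ) * Complex.I := by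
      push_cast; ring
    rw [he]
    simp only
    rw [this, Complex.norm_exp_ofReal_mul_I]
  -- full sum
  have hfull : ‖∑' l : ℤ, (g l : ℂ) * e l‖ ≤ M * (ε * K) := by
    have h := wk_poisson hr0 0 β _ (hs1.mul_left ε) (by
      intro n
      conv_rhs => rw [← hεexp, ← Real.exp_add]
      apply Real.exp_le_exp.mpr
      have hq : β ^ 2 / 2 + (n : ℝ) ^ 2 / 8 ≤ ((n : ℝ) - β) ^ 2 := by
        by_cases hn : n = 0
        · subst hn; simp; nlinarith [sq_nonneg β]
        · have hn1 : (1 : ℝ) ≤ |(n : ℝ)| := by exact_mod_cast Int.one_le_abs hn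
          have h1 : |(n : ℝ)| - |β| ≤ |(n : ℝ) - β| := abs_sub_abs_le_abs_sub _ _
          rw [← sq_abs β, ← sq_abs (n : ℝ), ← sq_abs ((n : ℝ) - β)]
          nlinarith [abs_nonneg β]
      exact wk_exponent hr1 hlg0 hr2 hβB hq)
    rw [tsum_mul_left] at h
    convert h using 3
    funext n
    rw [Complex.exp_add, hg, he]
    congr 1
    simp only
    rw [Complex.ofReal_exp]
    congr 1
    push_cast
    ring
  -- tail
  set t : ℤ → ℝ := fun l => if |(l : ℝ)| ≤ L then 0 else g l with ht
  have hL0 : 0 < L := hr0.trans hrL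
  have hA : ∀ x : ℝ, Summable fun n : ℤ => Real.exp (-((1 / (2 * r ^ 2)) * ((n : ℝ) - x) ^ 2)) :=
    fun x => wk_summable (by positivity) x
  have hgL : ∀ (l : ℤ) (x : ℝ), L ^ 2 + ((l : ℝ) - x) ^ 2 ≤ (l : ℝ) ^ 2 →
      g l ≤ ε * Real.exp (-((1 / (2 * r ^ 2)) * ((l : ℝ) - x) ^ 2)) := by
    intro l x h
    conv_rhs => rw [← hεexp, ← Real.exp_add]
    apply Real.exp_le_exp.mpr
    have h1 : lg = 1 / (2 * r ^ 2) * L ^ 2 := by rw [hL2]; field_simp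
    have := mul_le_mul_of_nonneg_left h (by positivity : 0 ≤ 1 / (2 * r ^ 2))
    rw [sub_zero]
    linarith
  have htb : ∀ l, t l ≤ ε * (Real.exp (-((1 / (2 * r ^ 2)) * ((l : ℝ) - L) ^ 2)) +
      Real.exp (-((1 / (2 * r ^ 2)) * ((l : ℝ) - (-L)) ^ 2))) := by
    intro l
    have p1 := Real.exp_pos (-((1 / (2 * r ^ 2)) * ((l : ℝ) - L) ^ 2))
    have p2 := Real.exp_pos (-((1 / (2 * r ^ 2)) * ((l : ℝ) - (-L)) ^ 2))
    simp only [ht]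
    split_ifs with h
    · positivity
    · rw [not_le, lt_abs] at h
      rw [mul_add]
      rcases h with h | h
      · have := hgL l L (by nlinarith)
        nlinarith [mul_pos hε p2]
      · have := hgL l (-L) (by nlinarith)
        nlinarith [mul_pos hε p1]
  have ht0 : ∀ l, 0 ≤ t l := by
    intro l
    simp only [ht]
    split_ifs
    · exact le_rfl
    · exact (Real.exp_pos _).le
  have hbs := ((hA L).add (hA (-L))).mul_left ε
  have hts : Summable t := hbs.of_nonneg_of_le ht0 htb
  have htail : ∑' l, t l ≤ ε * (M * K + M * K) := by
    refine (hts.tsum_le_tsum htb hbs).trans ?_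
    rw [tsum_mul_left, (hA L).tsum_add (hA (-L))]
    gcongr
    · exact wk_shift hr1 L
    · exact wk_shift hr1 (-L)
  have hges : Summable fun l : ℤ => (g l : ℂ) * e l := by
    apply Summable.of_norm
    refine hgs.congr fun l => ?_
    rw [norm_mul, henorm, mul_one, Complex.norm_real, Real.norm_of_nonneg (Real.exp_pos _).le]
  have htn : ∀ l, ‖(t l : ℂ) * e l‖ = t l := by
    intro l
    rw [norm_mul, henorm, mul_one, Complex.norm_real, Real.norm_of_nonneg (ht0 l)]
  have htes : Summable fun l : ℤ => (t l : ℂ) * e l := by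
    apply Summable.of_norm
    exact hts.congr fun l => (htn l).symm
  have hmain : (∑' l : ℤ, (if |(l : ℝ)| ≤ L then
                ((Gwin N r L l : ℝ) : ℂ)
                  * Complex.exp (2 * (Real.pi : ℂ) * Complex.I * (w : ℂ) * (l : ℂ) / (N : ℂ))
              else 0)) =
      ((M⁻¹ : ℝ) : ℂ) * ((∑' l : ℤ, (g l : ℂ) * e l) - ∑' l : ℤ, (t l : ℂ) * e l) := by
    rw [← hges.tsum_sub htes, ← tsum_mul_left]
    apply tsum_congr
    intro l
    simp only [ht]
    split_ifs with h
    · rw [wk_gwin hLN l h, hchar l]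
      push_cast
      simp only [hg, he, hM]
      push_cast
      ring
    · simp
  rw [hmain, norm_mul, Complex.norm_real, Real.norm_of_nonneg (by positivity)]
  have h2 : ‖∑' l : ℤ, (t l : ℂ) * e l‖ ≤ ε * (M * K + M * K) := by
    refine (norm_tsum_le_tsum_norm htes.norm).trans ?_
    rw [tsum_congr htn]
    exact htail
  rw [inv_mul_le_iff₀ hM0]
  refine (norm_sub_le _ _).trans ((add_le_add hfull h2).trans (le_of_eq ?_))
  ring
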